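/- arXiv:2303.10418 — 2 statements merged into one kernel-verified Lean document; each statement's English description precedes it below -/
import Mathlib

section
/- Let p ≥ 1 and n ≥ 1 be integers, and let π be a noncrossing partition of {0, 1, …, p−1}. Say that a tuple i : {0,…,p−1} → {0,…,n−1} is π-coupled if for every block V of π and every l ∈ V one has i_l = i_{next_V(l)+1}, where next_V(l) is the smallest element of V strictly greater than l if such exists and is min V otherwise, and where the index addition +1 is taken modulo p. Then the number of π-coupled tuples equals n^{e(π)+1}, where e(π) is the number of blocks of π of even cardinality. -/
/-- The successor of `l` inside the block `V`: the smallest element of `V` strictly greater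
than `l` if it exists, and otherwise the minimum of `V`. -/
def blockNext {p : ℕ} (V : Finset (Fin p)) (hV : V.Nonempty) (l : Fin p) : Fin p :=
  if h : (V.filter fun m => l < m).Nonempty then (V.filter fun m => l < m).min' h
  else V.min' hV

/-- `m` and `l` are elements of `V` with `m < l` and no element of `V` strictly in between. -/
structure BlockConsecutive {p : ℕ} (V : Finset (Fin p)) (m l : Fin p) : Prop where
  left_mem : m ∈ V
  right_mem : l ∈ V
  lt : m < l
  not_between : ∀ x ∈ V, ¬ (m < x ∧ x < l)

/-- `[a, b)` is a union of blocks of `π`. -/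
def IsUnionOfBlocks {p : ℕ} (π : Finpartition (Finset.univ : Finset (Fin p))) (a b : ℕ) : Prop :=
  ∀ V ∈ π.parts, ∀ x ∈ V, ∀ y ∈ V, a ≤ (x : ℕ) → (x : ℕ) < b → a ≤ (y : ℕ) ∧ (y : ℕ) < b

/-- Elements `a < b < c < d` with `a, c` in one block and `b, d` in another do not exist. -/
def IsNoncrossing {p : ℕ} (π : Finpartition (Finset.univ : Finset (Fin p))) : Prop :=
  ∀ V ∈ π.parts, ∀ W ∈ π.parts, ∀ a ∈ V, ∀ b ∈ W, ∀ c ∈ V, ∀ d ∈ W,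
    a < b → b < c → c < d → V = W

section Block

variable {p : ℕ} {V : Finset (Fin p)}

theorem exists_blockConsecutive_left {l a : Fin p} (hl : l ∈ V) (ha : a ∈ V) (hal : a < l) :
    ∃ m, BlockConsecutive V m l := by
  have hne : (V.filter (· < l)).Nonempty := ⟨a, by simp [ha, hal]⟩
  have hmem := Finset.max'_mem _ hne
  rw [Finset.mem_filter] at hmem
  refine ⟨_, hmem.1, hl, hmem.2, fun x hx hlt => ?_⟩
  exact absurd (Finset.le_max' _ x (by simp [hx, hlt.2])) (not_le.mpr hlt.1)

theorem BlockConsecutive.left_unique {m m' l : Fin p} (h : BlockConsecutive V m l)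
    (h' : BlockConsecutive V m' l) : m = m' := by
  rcases lt_trichotomy m m' with hlt | heq | hlt
  · exact absurd ⟨hlt, h'.lt⟩ (h.not_between _ h'.left_mem)
  · exact heq
  · exact absurd ⟨hlt, h.lt⟩ (h'.not_between _ h.left_mem)

theorem BlockConsecutive.card_filter_lt {m l : Fin p} (h : BlockConsecutive V m l) :
    (V.filter (· < l)).card = (V.filter (· < m)).card + 1 := by
  have : V.filter (· < l) = insert m (V.filter (· < m)) := by
    ext x
    have h1 := h.not_between x
    have h2 := h.lt
    have h3 := h.left_mem
    simp only [Finset.mem_filter, Finset.mem_insert]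
    grind
  rw [this, Finset.card_insert_of_notMem (by simp)]

theorem card_filter_lt_max {M : Fin p} (hM : M ∈ V) (hmax : ∀ x ∈ V, x ≤ M) :
    (V.filter (· < M)).card + 1 = V.card := by
  have : V.filter (· < M) = V.erase M := by
    ext x
    have := hmax x
    simp only [Finset.mem_filter, Finset.mem_erase]
    grind
  rw [this, Finset.card_erase_add_one hM]

theorem BlockConsecutive.blockNext_eq {m l : Fin p} (h : BlockConsecutive V m l)
    (hV : V.Nonempty) : blockNext V hV m = l := by
  have hne : (V.filter fun x => m < x).Nonempty := ⟨l, by simp [h.right_mem, h.lt]⟩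
  rw [blockNext, dif_pos hne]
  refine le_antisymm (Finset.min'_le _ _ (by simp [h.right_mem, h.lt])) ?_
  refine Finset.le_min' _ _ _ fun x hx => ?_
  rw [Finset.mem_filter] at hx
  exact not_lt.mp fun hlt => h.not_between x hx.1 ⟨hx.2, hlt⟩

theorem blockNext_max_eq {a M : Fin p} (hmax : ∀ x ∈ V, x ≤ M) (ha : a ∈ V)
    (hmin : ∀ x ∈ V, a ≤ x) (hV : V.Nonempty) : blockNext V hV M = a := by
  have hne : ¬ (V.filter fun x => M < x).Nonempty := by
    rintro ⟨x, hx⟩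
    rw [Finset.mem_filter] at hx
    exact absurd (hmax x hx.1) (not_le.mpr hx.2)
  rw [blockNext, dif_neg hne]
  exact le_antisymm (Finset.min'_le _ _ ha) (Finset.le_min' _ _ _ hmin)

theorem blockConsecutive_blockNext {l M : Fin p} (hl : l ∈ V) (hM : M ∈ V) (hlM : l < M)
    (hV : V.Nonempty) : BlockConsecutive V l (blockNext V hV l) := by
  have hne : (V.filter fun x => l < x).Nonempty := ⟨M, by simp [hM, hlM]⟩
  have hmem := Finset.min'_mem _ hne
  rw [blockNext, dif_pos hne]
  rw [Finset.mem_filter] at hmem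
  refine ⟨hl, hmem.1, hmem.2, fun x hx hlt => ?_⟩
  exact absurd (Finset.min'_le _ x (by simp [hx, hlt.1])) (not_le.mpr hlt.2)

variable {α : Type*} {I : ℕ → α}

/-- If the gaps of a block are balanced, the pair `(I l, I (l + 1))` alternates along the block. -/
theorem alternates_along_block
    (hlink : ∀ m l, BlockConsecutive V m l → I m = I (l + 1))
    (hgap : ∀ m l, BlockConsecutive V m l → I (m + 1) = I l)
    {a : Fin p} (ha : a ∈ V) (hmin : ∀ x ∈ V, a ≤ x) (l : Fin p) (hl : l ∈ V) :
    (Even (V.filter (· < l)).card → I l = I a ∧ I (l + 1) = I (a + 1)) ∧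
      (¬ Even (V.filter (· < l)).card → I l = I (a + 1) ∧ I (l + 1) = I a) := by
  induction l using WellFoundedLT.induction with
  | ind l ih =>
    rcases (hmin l hl).eq_or_lt with rfl | hlt
    · have : V.filter (· < a) = ∅ := by
        ext x
        have := hmin x
        simp only [Finset.mem_filter, Finset.notMem_empty]
        grind
      simp [this]
    · obtain ⟨m, hm⟩ := exists_blockConsecutive_left hl ha hlt
      have := ih m hm.lt hm.left_mem
      rw [hm.card_filter_lt, Nat.even_add_one, ← hgap m l hm, ← hlink m l hm]
      tauto

theorem balanced_block_ends
    (hlink : ∀ m l, BlockConsecutive V m l → I m = I (l + 1))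
    (hgap : ∀ m l, BlockConsecutive V m l → I (m + 1) = I l)
    {a M : Fin p} (ha : a ∈ V) (hmin : ∀ x ∈ V, a ≤ x) (hM : M ∈ V) (hmax : ∀ x ∈ V, x ≤ M)
    (hodd : ¬ Even V.card → I a = I (a + 1) ∨ I M = I (a + 1)) :
    I a = I (M + 1) ∧ I M = I (a + 1) ∧ (¬ Even V.card → I a = I (a + 1)) := by
  have h := alternates_along_block hlink hgap ha hmin M hM
  have hc := card_filter_lt_max hM hmax
  rw [← hc, Nat.even_add_one, not_not] at hodd ⊢
  grind

end Block

section Noncrossing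

variable {p : ℕ} {π : Finpartition (Finset.univ : Finset (Fin p))}

theorem BlockConsecutive.isUnionOfBlocks (hnc : IsNoncrossing π) {V : Finset (Fin p)}
    (hV : V ∈ π.parts) {m l : Fin p} (h : BlockConsecutive V m l) :
    IsUnionOfBlocks π (m + 1) l := by
  intro W hW x hx y hy h1 h2
  have hmx : m < x := Fin.lt_def.mpr (by omega)
  have hxl : x < l := Fin.lt_def.mpr h2
  have hne : V ≠ W := fun e => h.not_between x (e ▸ hx) ⟨hmx, hxl⟩
  have hdisj : ∀ z ∈ V, z ∉ W := fun z hz hz' => hne (π.eq_of_mem_parts hV hW hz hz')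
  constructor
  · by_contra hlt
    have hym : y ≠ m := fun e => hdisj m h.left_mem (e ▸ hy)
    have : y < m := lt_of_le_of_ne (Fin.le_def.mpr (by omega)) hym
    exact hne (hnc W hW V hV y hy m h.left_mem x hx l h.right_mem this hmx hxl).symm
  · by_contra hlt
    have hyl : y ≠ l := fun e => hdisj l h.right_mem (e ▸ hy)
    have : l < y := lt_of_le_of_ne (Fin.le_def.mpr (by omega)) hyl.symm
    exact hne (hnc V hV W hW m h.left_mem x hx l h.right_mem y hy hmx hxl this)

theorem IsUnionOfBlocks.drop_first (hnc : IsNoncrossing π) {b : ℕ} {a M : Fin p}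
    (hab : IsUnionOfBlocks π a b) {V : Finset (Fin p)} (hV : V ∈ π.parts) (ha : a ∈ V)
    (hM : M ∈ V) (hmax : ∀ x ∈ V, x ≤ M) : IsUnionOfBlocks π (M + 1) b := by
  intro W hW x hx y hy h1 h2
  have haM : (a : ℕ) ≤ M := hmax a ha
  have hy' := hab W hW x hx y hy (by omega) h2
  refine ⟨?_, hy'.2⟩
  by_contra hlt
  have hMx : M < x := Fin.lt_def.mpr (by omega)
  have hne : V ≠ W := fun e => absurd (hmax x (e ▸ hx)) (not_le.mpr hMx)
  have hdisj : ∀ z ∈ V, z ∉ W := fun z hz hz' => hne (π.eq_of_mem_parts hV hW hz hz')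
  have hya : a ≠ y := fun e => hdisj a ha (e ▸ hy)
  have hyM : y ≠ M := fun e => hdisj M hM (e ▸ hy)
  exact hne (hnc V hV W hW a ha y hy M hM x hx
    (lt_of_le_of_ne (Fin.le_def.mpr hy'.1) hya)
    (lt_of_le_of_ne (Fin.le_def.mpr (by omega)) hyM) hMx)

variable {α : Type*} {I : ℕ → α}

theorem IsUnionOfBlocks.apply_eq (hnc : IsNoncrossing π)
    (hlink : ∀ V ∈ π.parts, ∀ m l, BlockConsecutive V m l → I m = I (l + 1))
    (hodd : ∀ V ∈ π.parts, ¬ Even V.card → ∀ a ∈ V, (∀ x ∈ V, a ≤ x) → ∀ M ∈ V,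
      (∀ x ∈ V, x ≤ M) → I a = I (a + 1) ∨ I M = I (a + 1))
    {a b : ℕ} (hab : a ≤ b) (hb : b ≤ p) (h : IsUnionOfBlocks π a b) : I a = I b := by
  induction hd : b - a using Nat.strong_induction_on generalizing a b with
  | _ d ih =>
    rcases hab.eq_or_lt with rfl | hlt
    · rfl
    · obtain ⟨s, rfl⟩ : ∃ s : Fin p, (s : ℕ) = a := ⟨⟨a, by omega⟩, rfl⟩
      have hV : π.part s ∈ π.parts := π.part_mem.mpr (Finset.mem_univ s)
      have hs : s ∈ π.part s := π.mem_part (Finset.mem_univ s)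
      have hin := fun x hx => h _ hV s hs x hx le_rfl hlt
      have hmin : ∀ x ∈ π.part s, s ≤ x := fun x hx => Fin.le_def.mpr (hin x hx).1
      have hM := Finset.max'_mem _ ⟨s, hs⟩
      have hmax := fun x hx => Finset.le_max' (π.part s) x hx
      set M := (π.part s).max' ⟨s, hs⟩
      have hMb := (hin M hM).2
      have hsM : (s : ℕ) ≤ M := hmin M hM
      have hgap : ∀ m l, BlockConsecutive (π.part s) m l → I (m + 1) = I l := by
        intro m l hml
        have h1 : (m : ℕ) < l := hml.lt
        have h2 := hin m hml.left_mem
        have h3 := hin l hml.right_mem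
        exact ih (l - (m + 1)) (by omega) (by omega) (by omega) (hml.isUnionOfBlocks hnc hV) rfl
      rw [(balanced_block_ends (hlink _ hV) hgap hs hmin hM hmax
        fun ho => hodd _ hV ho s hs hmin M hM hmax).1]
      exact ih (b - (M + 1)) (by omega) (by omega) hb (h.drop_first hnc hV hs hM hmax) rfl

theorem isUnionOfBlocks_univ : IsUnionOfBlocks π 0 p :=
  fun _ _ _ _ y _ _ _ => ⟨Nat.zero_le _, y.isLt⟩

theorem link_max_iff_odd (hnc : IsNoncrossing π)
    (hlink : ∀ V ∈ π.parts, ∀ m l, BlockConsecutive V m l → I m = I (l + 1)) :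
    (∀ V ∈ π.parts, ∀ a ∈ V, (∀ x ∈ V, a ≤ x) → ∀ M ∈ V, (∀ x ∈ V, x ≤ M) → I M = I (a + 1)) ↔
      ∀ V ∈ π.parts, ¬ Even V.card → ∀ a ∈ V, (∀ x ∈ V, a ≤ x) → I a = I (a + 1) := by
  have key (hodd : ∀ V ∈ π.parts, ¬ Even V.card → ∀ a ∈ V, (∀ x ∈ V, a ≤ x) → ∀ M ∈ V,
      (∀ x ∈ V, x ≤ M) → I a = I (a + 1) ∨ I M = I (a + 1)) (V) (hV : V ∈ π.parts) (a) (ha : a ∈ V)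
      (hmin : ∀ x ∈ V, a ≤ x) (M) (hM : M ∈ V) (hmax : ∀ x ∈ V, x ≤ M) :=
    balanced_block_ends (hlink V hV)
      (fun m l hml => IsUnionOfBlocks.apply_eq hnc hlink hodd hml.lt l.isLt.le
        (hml.isUnionOfBlocks hnc hV)) ha hmin hM hmax
      (fun ho => hodd V hV ho a ha hmin M hM hmax)
  constructor
  · intro h V hV ho a ha hmin
    exact (key (fun V hV _ a ha hmin M hM hmax => Or.inr (h V hV a ha hmin M hM hmax)) V hV a ha
      hmin _ (Finset.max'_mem V ⟨a, ha⟩) fun x hx => Finset.le_max' V x hx).2.2 ho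
  · intro h V hV a ha hmin M hM hmax
    exact (key (fun V hV ho a ha hmin M _ _ => Or.inl (h V hV ho a ha hmin)) V hV a ha hmin M hM
      hmax).2.1

end Noncrossing

/-- Functions on `ℕ` whose values outside `F` are copied from smaller arguments are freely
determined by their values on `F`. -/
theorem card_functions_of_parent {n : ℕ} (F : Finset ℕ) (par : ℕ → ℕ)
    (hpar : ∀ x ∉ F, par x < x) :
    Nat.card {I : ℕ → Fin n // ∀ x ∉ F, I x = I (par x)} = n ^ F.card := by
  have hbij : Function.Bijective
      fun (I : {I : ℕ → Fin n // ∀ x ∉ F, I x = I (par x)}) (x : F) => I.1 x := by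
    constructor
    · rintro ⟨I, hI⟩ ⟨J, hJ⟩ h
      refine Subtype.ext (funext fun x => ?_)
      induction x using Nat.strong_induction_on with
      | _ x ih =>
        by_cases hx : x ∈ F
        · exact congrFun h ⟨x, hx⟩
        · exact (hI x hx).trans ((ih _ (hpar x hx)).trans (hJ x hx).symm)
    · intro y
      let step (x : ℕ) (g : ∀ z < x, Fin n) : Fin n :=
        if hx : x ∈ F then y ⟨x, hx⟩ else g (par x) (hpar x hx)
      have hfix (x : ℕ) : (Nat.lt_wfRel.wf.fix step : ℕ → Fin n) x =
          step x fun z _ => Nat.lt_wfRel.wf.fix step z := Nat.lt_wfRel.wf.fix_eq step x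
      refine ⟨⟨Nat.lt_wfRel.wf.fix step, fun x hx => ?_⟩, funext fun x => ?_⟩
      · rw [hfix x]
        exact dif_neg hx
      · exact (hfix x).trans (dif_pos x.2)
  rw [Nat.card_eq_of_bijective _ hbij]
  simp

section Counting

variable {p : ℕ} (π : Finpartition (Finset.univ : Finset (Fin p)))

/-- The minima of the blocks of even cardinality. -/
def evenBlockMinima : Finset (Fin p) :=
  Finset.univ.filter fun l => Even (π.part l).card ∧ ∀ x ∈ π.part l, l ≤ x

/-- `0` together with the successors of the minima of the blocks of even cardinality. -/
def freePositions : Finset ℕ :=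
  insert 0 ((evenBlockMinima π).image fun l : Fin p => (l : ℕ) + 1)

theorem card_evenBlockMinima :
    (evenBlockMinima π).card = (π.parts.filter fun B => Even B.card).card := by
  refine Finset.card_bij (fun l _ => π.part l) (fun l hl => ?_) (fun l hl m hm h => ?_)
    fun V hV => ?_
  · simp only [evenBlockMinima, Finset.mem_filter] at hl ⊢
    exact ⟨π.part_mem.mpr hl.1, hl.2.1⟩
  · simp only [evenBlockMinima, Finset.mem_filter] at hl hm
    exact le_antisymm (hl.2.2 m (h ▸ π.mem_part (Finset.mem_univ m)))
      (hm.2.2 l (h ▸ π.mem_part (Finset.mem_univ l)))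
  · rw [Finset.mem_filter] at hV
    have hne := π.nonempty_of_mem_parts hV.1
    have hpart := π.part_eq_of_mem hV.1 (Finset.min'_mem V hne)
    refine ⟨V.min' hne, ?_, hpart⟩
    simp only [evenBlockMinima, Finset.mem_filter, hpart]
    exact ⟨Finset.mem_univ _, hV.2, fun x hx => Finset.min'_le V x hx⟩

theorem card_freePositions :
    (freePositions π).card = (π.parts.filter fun B => Even B.card).card + 1 := by
  rw [freePositions, Finset.card_insert_of_notMem (by simp), Finset.card_image_of_injective,
    card_evenBlockMinima]
  intro l m h
  exact Fin.ext (Nat.succ_injective h)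

theorem exists_parent : ∃ par : ℕ → ℕ, (∀ x, p < x → par x = 0) ∧
    (∀ l : Fin p, (∀ x ∈ π.part l, l ≤ x) → par (l + 1) = l) ∧
    ∀ m l : Fin p, BlockConsecutive (π.part l) m l → par (l + 1) = m := by
  have h (x : ℕ) : ∃ y : ℕ, (p < x → y = 0) ∧
      (∀ l : Fin p, x = l + 1 → (∀ z ∈ π.part l, l ≤ z) → y = l) ∧
      ∀ m l : Fin p, x = l + 1 → BlockConsecutive (π.part l) m l → y = m := by
    by_cases hx : ∃ l : Fin p, x = l + 1
    · obtain ⟨l, rfl⟩ := hx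
      have hl := π.mem_part (Finset.mem_univ l)
      have heq (k : Fin p) (hk : (l : ℕ) + 1 = k + 1) : l = k := Fin.ext (by omega)
      by_cases hmin : ∀ z ∈ π.part l, l ≤ z
      · refine ⟨l, by omega, fun k hk _ => by rw [heq k hk], fun m k hk hc => ?_⟩
        obtain rfl := heq k hk
        exact absurd (hmin m hc.left_mem) (not_le.mpr hc.lt)
      · push Not at hmin
        obtain ⟨a, ha, hal⟩ := hmin
        obtain ⟨m, hm⟩ := exists_blockConsecutive_left hl ha hal
        refine ⟨m, by omega, fun k hk hmin => ?_, fun m' k hk hc => ?_⟩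
        · obtain rfl := heq k hk
          exact absurd (hmin a ha) (not_le.mpr hal)
        · obtain rfl := heq k hk
          rw [hm.left_unique hc]
    · push Not at hx
      exact ⟨0, fun _ => rfl, fun l hl => absurd hl (hx l), fun _ l hl => absurd hl (hx l)⟩
  choose par h1 h2 h3 using h
  exact ⟨par, h1, fun l => h2 _ l rfl, fun m l => h3 _ m l rfl⟩

theorem card_linear_functions (n : ℕ) :
    Nat.card {I : ℕ → Fin n //
      (∀ V ∈ π.parts, ∀ m l, BlockConsecutive V m l → I m = I (l + 1)) ∧
      (∀ V ∈ π.parts, ¬ Even V.card → ∀ a ∈ V, (∀ x ∈ V, a ≤ x) → I a = I (a + 1)) ∧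
      ∀ x, p < x → I x = I 0} =
      n ^ ((π.parts.filter fun B => Even B.card).card + 1) := by
  obtain ⟨par, hout, hmin, hcons⟩ := exists_parent π
  have hfree (l : Fin p) :
      (l : ℕ) + 1 ∈ freePositions π ↔ Even (π.part l).card ∧ ∀ x ∈ π.part l, l ≤ x := by
    simp [freePositions, evenBlockMinima, Fin.val_inj]
  have hcases (x : ℕ) : x = 0 ∨ p < x ∨ ∃ l : Fin p, x = l + 1 := by
    rcases x with _ | x
    · exact Or.inl rfl
    · by_cases hx : x < p
      · exact Or.inr (Or.inr ⟨⟨x, hx⟩, rfl⟩)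
      · exact Or.inr (Or.inl (by omega))
  have hzero : 0 ∈ freePositions π := by simp [freePositions]
  have hcases_block (l : Fin p) :
      (∀ x ∈ π.part l, l ≤ x) ∨ ∃ m, BlockConsecutive (π.part l) m l := by
    by_cases h : ∀ x ∈ π.part l, l ≤ x
    · exact Or.inl h
    · push Not at h
      obtain ⟨a, ha, hal⟩ := h
      exact Or.inr (exists_blockConsecutive_left (π.mem_part (Finset.mem_univ l)) ha hal)
  rw [← card_freePositions, ← card_functions_of_parent (freePositions π) par]
  · refine Nat.card_congr (Equiv.subtypeEquivRight fun I => ⟨?_, fun h => ⟨?_, ?_, ?_⟩⟩)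
    · rintro ⟨h1, h2, h3⟩ x hx
      rcases hcases x with rfl | hpx | ⟨l, rfl⟩
      · exact absurd hzero hx
      · rw [h3 x hpx, hout x hpx]
      · have hV := π.part_mem.mpr (Finset.mem_univ l)
        have hl := π.mem_part (Finset.mem_univ l)
        rcases hcases_block l with h | ⟨m, hm⟩
        · rw [hmin l h, h2 _ hV (fun he => hx ((hfree l).mpr ⟨he, h⟩)) l hl h]
        · rw [hcons m l hm, h1 _ hV m l hm]
    · intro V hV m l hml
      have hpart := π.part_eq_of_mem hV hml.right_mem
      rw [← hpart] at hml
      rw [h (l + 1), hcons m l hml]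
      exact fun hl => absurd (((hfree l).mp hl).2 m hml.left_mem) (not_le.mpr hml.lt)
    · intro V hV ho a ha hle
      have hpart := π.part_eq_of_mem hV ha
      rw [h (a + 1), hmin a (hpart ▸ hle)]
      exact fun hl => ho (hpart ▸ ((hfree a).mp hl).1)
    · intro x hx
      rw [h x, hout x hx]
      simp only [freePositions, Finset.mem_insert, Finset.mem_image, not_or, not_exists, not_and]
      exact ⟨by omega, fun l _ => by have := l.isLt; omega⟩
  · intro x hx
    rcases hcases x with rfl | hpx | ⟨l, rfl⟩
    · exact absurd hzero hx
    · rw [hout x hpx]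
      omega
    · rcases hcases_block l with h | ⟨m, hm⟩
      · rw [hmin l h]
        omega
      · rw [hcons m l hm]
        have : (m : ℕ) < l := hm.lt
        omega

theorem coupled_iff_linear {p : ℕ} [NeZero p] {π : Finpartition (Finset.univ : Finset (Fin p))}
    (hnc : IsNoncrossing π) {α : Type*} {i : Fin p → α} {I : ℕ → α}
    (hI : ∀ l : Fin p, I l = i l) (hIs : ∀ l : Fin p, I (l + 1) = i (l + 1)) :
    (∀ V ∈ π.parts, ∀ l : Fin p, ∀ hl : l ∈ V, i l = i (blockNext V ⟨l, hl⟩ l + 1)) ↔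
      (∀ V ∈ π.parts, ∀ m l, BlockConsecutive V m l → I m = I (l + 1)) ∧
      ∀ V ∈ π.parts, ¬ Even V.card → ∀ a ∈ V, (∀ x ∈ V, a ≤ x) → I a = I (a + 1) := by
  constructor
  · intro h
    have hlink : ∀ V ∈ π.parts, ∀ m l, BlockConsecutive V m l → I m = I (l + 1) := by
      intro V hV m l hml
      rw [hI, hIs, h V hV m hml.left_mem, hml.blockNext_eq ⟨m, hml.left_mem⟩]
    refine ⟨hlink, (link_max_iff_odd hnc hlink).mp fun V hV a ha hmin M hM hmax => ?_⟩
    rw [hI, hIs, h V hV M hM, blockNext_max_eq hmax ha hmin ⟨M, hM⟩]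
  · rintro ⟨hlink, hodd⟩ V hV l hl
    by_cases hmax : ∀ x ∈ V, x ≤ l
    · have ha := Finset.min'_mem V ⟨l, hl⟩
      have hmin := fun x hx => Finset.min'_le V x hx
      rw [blockNext_max_eq hmax ha hmin ⟨l, hl⟩, ← hI, ← hIs]
      exact (link_max_iff_odd hnc hlink).mpr hodd V hV _ ha hmin l hl hmax
    · push Not at hmax
      obtain ⟨M, hM, hlM⟩ := hmax
      rw [← hI, ← hIs]
      exact hlink V hV _ _ (blockConsecutive_blockNext hl hM hlM ⟨l, hl⟩)

end Counting

/-- For a noncrossing partition `π` of `{0, …, p-1}`, the number of tuples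
`i : Fin p → Fin n` that are `π`-coupled (i.e. `i l = i (next_V l + 1)` for every block `V` of
`π` and every `l ∈ V`, indices mod `p`) equals `n ^ (e(π) + 1)`, where `e(π)` is the number of
blocks of `π` of even cardinality. -/
theorem card_coupled_tuples_noncrossing
    (p n : ℕ) [NeZero p] (hp : 1 ≤ p) (hn : 1 ≤ n)
    (π : Finpartition (Finset.univ : Finset (Fin p)))
    (hnc : ¬ ∃ a b c d : Fin p, a < b ∧ b < c ∧ c < d ∧
      ∃ B ∈ π.parts, ∃ B' ∈ π.parts, B ≠ B' ∧ a ∈ B ∧ c ∈ B ∧ b ∈ B' ∧ d ∈ B') :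
    Nat.card {i : Fin p → Fin n //
        ∀ V ∈ π.parts, ∀ l : Fin p, ∀ hl : l ∈ V, i l = i (blockNext V ⟨l, hl⟩ l + 1)} =
      n ^ ((π.parts.filter fun B => Even B.card).card + 1) := by
  have hnc' : IsNoncrossing π := fun V hV W hW a ha b hb c hc d hd hab hbc hcd => by
    by_contra hne
    exact hnc ⟨a, b, c, d, hab, hbc, hcd, V, hV, W, hW, hne, ha, hc, hb, hd⟩
  rw [← card_linear_functions π n]
  let ext (i : Fin p → Fin n) (x : ℕ) : Fin n := if x ≤ p then i (Fin.ofNat p x) else i 0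
  have hval (i : Fin p → Fin n) (l : Fin p) : ext i l = i l := by
    simp [ext, l.isLt.le]
  have hsucc_val (l : Fin p) : (l + 1 : Fin p) = Fin.ofNat p (l + 1) := by
    apply Fin.ext
    simp [Fin.val_add]
  have hsucc (i : Fin p → Fin n) (l : Fin p) : ext i (l + 1) = i (l + 1) := by
    have : (l : ℕ) + 1 ≤ p := l.isLt
    simp only [ext, if_pos this, hsucc_val]
  have hzero (i : Fin p → Fin n) : ext i 0 = i 0 := by simp [ext]
  have hperiod (I : ℕ → Fin n)
      (hlink : ∀ V ∈ π.parts, ∀ m l, BlockConsecutive V m l → I m = I (l + 1))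
      (hodd : ∀ V ∈ π.parts, ¬ Even V.card → ∀ a ∈ V, (∀ x ∈ V, a ≤ x) → I a = I (a + 1))
      (hout : ∀ x, p < x → I x = I 0) : ext (fun l => I l) = I := by
    have h0 : I 0 = I p := isUnionOfBlocks_univ.apply_eq hnc' hlink
      (fun V hV ho a ha hmin _ _ _ => Or.inl (hodd V hV ho a ha hmin)) (Nat.zero_le p) le_rfl
    funext x
    rcases lt_trichotomy x p with hx | rfl | hx
    · exact hval (fun l => I l) ⟨x, hx⟩
    · simp [ext, h0]
    · simp [ext, hx.not_ge, hout x hx]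
  refine Nat.card_congr
    { toFun := fun i => ⟨ext i.1, ?_, ?_, ?_⟩
      invFun := fun I => ⟨fun l => I.1 l, ?_⟩
      left_inv := fun i => Subtype.ext (funext fun l => hval i.1 l)
      right_inv := fun I => Subtype.ext (hperiod I.1 I.2.1 I.2.2.1 I.2.2.2) }
  · exact ((coupled_iff_linear hnc' (hval i.1) (hsucc i.1)).mp i.2).1
  · exact ((coupled_iff_linear hnc' (hval i.1) (hsucc i.1)).mp i.2).2
  · intro x hx
    rw [hzero]
    exact if_neg hx.not_ge
  · refine (coupled_iff_linear hnc' (I := I.1) (fun _ => rfl) fun l => ?_).mpr ⟨I.2.1, I.2.2.1⟩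
    rw [← hsucc fun l => I.1 l, hperiod I.1 I.2.1 I.2.2.1 I.2.2.2]
end

section
/- Let A be a unital associative ℂ-algebra and φ : A → ℂ a ℂ-linear functional that is tracial, i.e. φ(ab) = φ(ba) for all a, b ∈ A. Let n ≥ 1 and let e_{ij} ∈ A for 0 ≤ i, j ≤ n−1 satisfy the matrix-unit relations e_{ij}·e_{kl} = δ_{jk}·e_{il} for all i,j,k,l and Σ_{i=0}^{n−1} e_{ii} = 1_A. For x ∈ A, define the matrix x̃ ∈ M_n(A) (an n × n matrix with entries in A) by x̃_{ij} = e_{0i}·x·e_{j0}. Then for every integer p ≥ 1, Σ_{i=0}^{n−1} φ((x̃^p)_{ii}) = φ(x^p). -/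
/-- Compression by matrix units is multiplicative, hence commutes with positive powers. -/
theorem compressed_matrix_pow_succ {n : ℕ} [NeZero n] {A : Type*} [Ring A]
    (e : Fin n → Fin n → A)
    (hmul : ∀ i j k l : Fin n, e i j * e k l = if j = k then e i l else 0)
    (hsum : ∑ i, e i i = 1) (x : A) (p : ℕ) :
    (Matrix.of fun i j : Fin n => e 0 i * x * e j 0) ^ (p + 1) =
      Matrix.of fun i j : Fin n => e 0 i * x ^ (p + 1) * e j 0 := by
  induction p with
  | zero => simp
  | succ p ih =>
    rw [pow_succ, ih]
    ext i j
    simp only [Matrix.mul_apply, Matrix.of_apply]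
    calc ∑ k, e 0 i * x ^ (p + 1) * e k 0 * (e 0 k * x * e j 0)
        = ∑ k, e 0 i * x ^ (p + 1) * e k k * (x * e j 0) := by
          refine Finset.sum_congr rfl fun k _ => ?_
          have h : e k 0 * e 0 k = e k k := by simp [hmul]
          simp only [← h, mul_assoc]
      _ = e 0 i * x ^ (p + 1 + 1) * e j 0 := by
          rw [← Finset.sum_mul, ← Finset.mul_sum, hsum, mul_one, pow_succ x (p + 1)]
          simp only [mul_assoc]

/-- Let `φ` be a tracial linear functional on a unital ℂ-algebra `A`, and let
`(e i j)` be a family of matrix units in `A` summing to `1`. For `x ∈ A`, the matrix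
`x̃ ∈ M_n(A)` with entries `x̃ i j = e 0 i * x * e j 0` satisfies
`Σ_i φ((x̃ ^ p) i i) = φ (x ^ p)` for every `p ≥ 1`. -/
theorem trace_compressed_matrix_moments
    (n : ℕ) [NeZero n] {A : Type*} [Ring A] [Algebra ℂ A]
    (φ : A →ₗ[ℂ] ℂ) (htr : ∀ a b : A, φ (a * b) = φ (b * a))
    (e : Fin n → Fin n → A)
    (hmul : ∀ i j k l : Fin n, e i j * e k l = if j = k then e i l else 0)
    (hsum : ∑ i, e i i = 1)
    (x : A) (p : ℕ) (hp : 1 ≤ p) :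
    ∑ i, φ (((Matrix.of fun i j : Fin n => e 0 i * x * e j 0) ^ p) i i) = φ (x ^ p) := by
  obtain ⟨p, rfl⟩ := Nat.exists_eq_add_of_le' hp
  rw [compressed_matrix_pow_succ e hmul hsum]
  have h (i : Fin n) : φ (e 0 i * x ^ (p + 1) * e i 0) = φ (e i i * x ^ (p + 1)) := by
    rw [htr, ← mul_assoc, hmul, if_pos rfl]
  simp only [Matrix.of_apply, h]
  rw [← map_sum, ← Finset.sum_mul, hsum, one_mul]
end
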